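/- Let X, Y ∈ SL(2,ℝ) with |tr(X)| > 2 and |tr(Y)| > 2, whose axes intersect at a point P and are distinct (P minimizes the displacement functions of both X and Y, and the two minimizing sets differ). Let S be the midpoint of P and X⁻¹·P, and let T be the midpoint of P and Y·P. Then the translation length of Y·X equals 2·dist(S,T), i.e. inf_{z ∈ ℍ} dist(z, (Y·X)·z) = 2·dist(S,T); moreover S and T lie on the axis of Y·X, with dist(S, (Y·X)·S) = 2·dist(S,T), and |tr(Y·X)| = 2·cosh(dist(S,T)). -/

import Mathlib

open UpperHalfPlane Matrix
open scoped MatrixGroups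

/-- The matrix of the half-turn about `z`: it has trace zero, determinant one, and fixes `z`. -/
noncomputable def halfTurn (z : ℍ) : Matrix (Fin 2) (Fin 2) ℝ :=
  !![z.re / z.im, -((z.re ^ 2 + z.im ^ 2) / z.im); 1 / z.im, -(z.re / z.im)]

lemma halfTurn_mul_self (z : ℍ) : halfTurn z * halfTurn z = -1 := by
  have := z.im_ne_zero
  ext i j
  fin_cases i <;> fin_cases j <;> simp [halfTurn, Matrix.mul_apply] <;> field_simp <;> ring

lemma trace_halfTurn (z : ℍ) : (halfTurn z).trace = 0 := by
  simp [halfTurn, Matrix.trace_fin_two]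

lemma det_halfTurn (z : ℍ) : (halfTurn z).det = 1 := by
  have := z.im_ne_zero
  simp [halfTurn, Matrix.det_fin_two]
  field_simp
  ring

lemma trace_halfTurn_mul_halfTurn (z w : ℍ) :
    (halfTurn z * halfTurn w).trace = -2 * Real.cosh (dist z w) := by
  have := z.im_ne_zero
  have := w.im_ne_zero
  rw [UpperHalfPlane.cosh_dist']
  simp [halfTurn, Matrix.trace_fin_two]
  field_simp
  ring

lemma halfTurn_smul (g : SL(2, ℝ)) (z : ℍ) :
    halfTurn (g • z) = (g : Matrix (Fin 2) (Fin 2) ℝ) * halfTurn z * (g⁻¹ : SL(2, ℝ)) := by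
  have hy := z.im_ne_zero
  have hdet := g.det_coe
  rw [Matrix.det_fin_two] at hdet
  have hcd : (g 1 0 * z.re + g 1 1) ^ 2 + (g 1 0 * z.im) ^ 2 ≠ 0 := by
    intro h
    have h1 : g 1 0 * z.im = 0 := by
      nlinarith [sq_nonneg (g 1 0 * z.re + g 1 1), sq_nonneg (g 1 0 * z.im)]
    have h2 : g 1 0 = 0 := by simpa [hy] using h1
    have h3 : g 1 1 = 0 := by simpa [h2] using h
    simp [h2, h3] at hdet
  have hnum : ((g 0 0 * z.re + g 0 1) * (g 1 0 * z.re + g 1 1) + g 0 0 * g 1 0 * z.im ^ 2) ^ 2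
      + z.im ^ 2 = ((g 0 0 * z.re + g 0 1) ^ 2 + (g 0 0 * z.im) ^ 2) *
        ((g 1 0 * z.re + g 1 1) ^ 2 + (g 1 0 * z.im) ^ 2) := by
    linear_combination (-z.im ^ 2 * (g 0 0 * g 1 1 - g 0 1 * g 1 0 + 1)) * hdet
  have hnormSq : Complex.normSq ((g 1 0 : ℂ) * z + (g 1 1 : ℂ)) =
      (g 1 0 * z.re + g 1 1) ^ 2 + (g 1 0 * z.im) ^ 2 := by
    simp [Complex.normSq_apply, sq]
  have hcoe := UpperHalfPlane.coe_specialLinearGroup_apply g z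
  simp only [Algebra.algebraMap_self, RingHom.id_apply] at hcoe
  have him : (g • z).im = z.im / ((g 1 0 * z.re + g 1 1) ^ 2 + (g 1 0 * z.im) ^ 2) := by
    rw [← coe_im, hcoe, Complex.div_im, hnormSq, ← sub_div]
    congr 1
    simp
    linear_combination z.im * hdet
  have hre : (g • z).re = ((g 0 0 * z.re + g 0 1) * (g 1 0 * z.re + g 1 1)
      + g 0 0 * g 1 0 * z.im ^ 2) / ((g 1 0 * z.re + g 1 1) ^ 2 + (g 1 0 * z.im) ^ 2) := by
    rw [← coe_re, hcoe, Complex.div_re, hnormSq, ← add_div]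
    congr 1
    simp
    ring
  generalize hD : (g 1 0 * z.re + g 1 1) ^ 2 + (g 1 0 * z.im) ^ 2 = D at *
  ext i j
  fin_cases i <;> fin_cases j <;>
    simp [halfTurn, Matrix.mul_apply, Matrix.adjugate_fin_two, him, hre] <;> field_simp
  · ring
  · linear_combination -hnum
  · linear_combination -hD
  · ring

/-- The displacement of `z` under `g`, in terms of traces. -/
lemma two_mul_cosh_dist_smul (g : SL(2, ℝ)) (z : ℍ) :
    2 * Real.cosh (dist z (g • z)) = (g : Matrix (Fin 2) (Fin 2) ℝ).trace ^ 2 - 2 +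
      ((g : Matrix (Fin 2) (Fin 2) ℝ) * halfTurn z).trace ^ 2 := by
  have h := trace_halfTurn_mul_halfTurn z (g • z)
  have hy := z.im_ne_zero
  have hdet := g.det_coe
  rw [Matrix.det_fin_two] at hdet
  have hinv : ((g⁻¹ : SL(2, ℝ)) : Matrix (Fin 2) (Fin 2) ℝ) =
      !![g 1 1, -g 0 1; -g 1 0, g 0 0] := by
    simp [Matrix.adjugate_fin_two]
  rw [show 2 * Real.cosh (dist z (g • z)) = -(halfTurn z * halfTurn (g • z)).trace by linarith,
    halfTurn_smul, hinv]
  simp only [halfTurn, Matrix.trace_fin_two, Matrix.mul_apply, Fin.sum_univ_two,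
    Matrix.of_apply, Matrix.cons_val_zero,
    Matrix.cons_val_one, Matrix.cons_val', Matrix.cons_val_fin_one]
  field_simp
  linear_combination (-2 * z.im ^ 2) * hdet

lemma exists_trace_mul_halfTurn_eq_zero (g : SL(2, ℝ))
    (hg : |(g : Matrix (Fin 2) (Fin 2) ℝ).trace| > 2) :
    ∃ z : ℍ, ((g : Matrix (Fin 2) (Fin 2) ℝ) * halfTurn z).trace = 0 := by
  have hdet := g.det_coe
  rw [Matrix.det_fin_two] at hdet
  have htr : 4 < (g 0 0 + g 1 1) ^ 2 := by
    rw [Matrix.trace_fin_two] at hg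
    have := sq_lt_sq.2 (show |(2 : ℝ)| < |g 0 0 + g 1 1| by simpa using hg)
    linarith
  by_cases hc : g 1 0 = 0
  · have had : g 1 1 - g 0 0 ≠ 0 := by
      intro h
      rw [hc] at hdet
      nlinarith
    refine ⟨⟨⟨g 0 1 / (g 1 1 - g 0 0), 1⟩, one_pos⟩, ?_⟩
    simp [halfTurn, Matrix.trace_fin_two, Matrix.mul_apply, hc, UpperHalfPlane.re, UpperHalfPlane.im]
    field_simp
    ring
  · have hpos : 0 < √((g 0 0 + g 1 1) ^ 2 - 4) / |2 * g 1 0| := by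
      have : 0 < (g 0 0 + g 1 1) ^ 2 - 4 := by linarith
      positivity
    have hsq : (√((g 0 0 + g 1 1) ^ 2 - 4) / |2 * g 1 0|) ^ 2 =
        ((g 0 0 + g 1 1) ^ 2 - 4) / (2 * g 1 0) ^ 2 := by
      rw [div_pow, Real.sq_sqrt (by linarith), sq_abs]
    refine ⟨⟨⟨(g 0 0 - g 1 1) / (2 * g 1 0), _⟩, hpos⟩, ?_⟩
    simp only [halfTurn, Matrix.trace_fin_two, UpperHalfPlane.re, UpperHalfPlane.im, hsq]
    generalize √((g 0 0 + g 1 1) ^ 2 - 4) / |2 * g 1 0| = y at hpos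
    simp [Matrix.mul_apply]
    field_simp
    linear_combination -4 * hdet

/-- A point of minimal displacement lies on the axis. -/
lemma trace_mul_halfTurn_eq_zero (g : SL(2, ℝ))
    (hg : |(g : Matrix (Fin 2) (Fin 2) ℝ).trace| > 2) (z : ℍ)
    (hz : ∀ w : ℍ, dist z (g • z) ≤ dist w (g • w)) :
    ((g : Matrix (Fin 2) (Fin 2) ℝ) * halfTurn z).trace = 0 := by
  obtain ⟨w, hw⟩ := exists_trace_mul_halfTurn_eq_zero g hg
  have h := Real.cosh_le_cosh.2 (abs_le_abs_of_nonneg dist_nonneg (hz w))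
  have h1 := two_mul_cosh_dist_smul g z
  have h2 := two_mul_cosh_dist_smul g w
  rw [hw] at h2
  have : ((g : Matrix (Fin 2) (Fin 2) ℝ) * halfTurn z).trace ^ 2 ≤ 0 := by linarith
  exact pow_eq_zero_iff two_ne_zero |>.1 (le_antisymm this (sq_nonneg _))

/-- The orthogonal complement of `halfTurn z` among trace-zero matrices is definite. -/
lemma eq_zero_of_trace_mul_halfTurn (V : Matrix (Fin 2) (Fin 2) ℝ) (z : ℍ) (h0 : V.trace = 0)
    (hV : (V * V).trace = 0) (hz : (V * halfTurn z).trace = 0) : V = 0 := by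
  have hy := z.im_ne_zero
  rw [Matrix.trace_fin_two] at h0
  have h11 : V 1 1 = -V 0 0 := by linarith
  simp [Matrix.trace_fin_two, Matrix.mul_apply, halfTurn, h11] at hV hz
  field_simp at hz
  have hsum : (V 0 0 - V 1 0 * z.re) ^ 2 + (V 1 0 * z.im) ^ 2 = 0 := by
    linear_combination hV / 2 - V 1 0 * hz
  have hw : V 1 0 * z.im = 0 := by
    nlinarith [sq_nonneg (V 0 0 - V 1 0 * z.re), sq_nonneg (V 1 0 * z.im)]
  have h10 : V 1 0 = 0 := by simpa [hy] using hw
  have h00 : V 0 0 = 0 := by simpa [h10] using hsum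
  have h01 : V 0 1 = 0 := by simpa [h10, h00] using hz
  ext i j
  fin_cases i <;> fin_cases j <;> simp [h00, h01, h10, h11]

lemma halfTurn_add_halfTurn_of_midpoint (P Q M : ℍ) (h : dist P M = dist M Q)
    (h' : dist P M + dist M Q = dist P Q) :
    halfTurn P + halfTurn Q = (2 * Real.cosh (dist P M)) • halfTurn M := by
  have hPQ : Real.cosh (dist P Q) = 2 * Real.cosh (dist P M) ^ 2 - 1 := by
    rw [← h', ← h, ← two_mul, Real.cosh_two_mul, Real.sinh_sq]
    ring
  have hQM : Real.cosh (dist Q M) = Real.cosh (dist P M) := by rw [h, dist_comm]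
  rw [← sub_eq_zero]
  apply eq_zero_of_trace_mul_halfTurn _ M
  · simp [trace_halfTurn]
  · simp only [add_mul, sub_mul, mul_add, mul_sub, Matrix.trace_add, Matrix.trace_sub, Matrix.smul_mul,
      Matrix.mul_smul, trace_smul, trace_halfTurn_mul_halfTurn, dist_self, dist_comm Q P, dist_comm M,
      hPQ, hQM, Real.cosh_zero, smul_eq_mul]
    ring
  · simp only [add_mul, sub_mul, Matrix.trace_add, Matrix.trace_sub, Matrix.smul_mul,
      trace_smul, trace_halfTurn_mul_halfTurn, dist_self, hQM, Real.cosh_zero, smul_eq_mul]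
    ring

/-- A half-turn about a point of the axis of `g` conjugates `g⁻¹` to `g`. -/
lemma halfTurn_mul_inv_mul_halfTurn (g : SL(2, ℝ)) (z : ℍ)
    (h : ((g : Matrix (Fin 2) (Fin 2) ℝ) * halfTurn z).trace = 0) :
    halfTurn z * (g⁻¹ : SL(2, ℝ)) * halfTurn z = -(g : Matrix (Fin 2) (Fin 2) ℝ) := by
  have hcomm : halfTurn z * (g⁻¹ : SL(2, ℝ)) = (g : Matrix (Fin 2) (Fin 2) ℝ) * halfTurn z := by
    simp [Matrix.trace_fin_two, Matrix.mul_apply, halfTurn] at h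
    ext i j
    fin_cases i <;> fin_cases j <;>
      simp [halfTurn, Matrix.mul_apply, Matrix.adjugate_fin_two]
    all_goals first | linear_combination -h | ring
  rw [hcomm, mul_assoc, halfTurn_mul_self, mul_neg, mul_one]

lemma one_add_mul_self (g : SL(2, ℝ)) :
    1 + (g : Matrix (Fin 2) (Fin 2) ℝ) * g =
      (g : Matrix (Fin 2) (Fin 2) ℝ).trace • (g : Matrix (Fin 2) (Fin 2) ℝ) := by
  have hdet := g.det_coe
  rw [Matrix.det_fin_two] at hdet
  ext i j
  fin_cases i <;> fin_cases j <;> simp [Matrix.mul_apply, Matrix.trace_fin_two]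
  all_goals first | linear_combination -hdet | ring

lemma exists_smul_eq_halfTurn_mul_halfTurn_left (g : SL(2, ℝ)) (P S : ℍ)
    (h : ((g : Matrix (Fin 2) (Fin 2) ℝ) * halfTurn P).trace = 0)
    (hS : dist P S = dist S (g⁻¹ • P)) (hS' : dist P S + dist S (g⁻¹ • P) = dist P (g⁻¹ • P)) :
    ∃ a : ℝ, halfTurn P * halfTurn S = a • (g : Matrix (Fin 2) (Fin 2) ℝ) := by
  have hm := halfTurn_add_halfTurn_of_midpoint P _ S hS hS'
  have hc := (Real.cosh_pos (dist P S)).ne'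
  refine ⟨-((g : Matrix (Fin 2) (Fin 2) ℝ).trace / (2 * Real.cosh (dist P S))), ?_⟩
  have hs : halfTurn S = (2 * Real.cosh (dist P S))⁻¹ • (halfTurn P + halfTurn (g⁻¹ • P)) := by
    rw [hm, smul_smul, inv_mul_cancel₀ (by positivity), one_smul]
  rw [hs, Matrix.mul_smul, halfTurn_smul, inv_inv, mul_add, ← mul_assoc, ← mul_assoc,
    halfTurn_mul_inv_mul_halfTurn g P h, halfTurn_mul_self, neg_mul, ← neg_add, one_add_mul_self,
    smul_neg, smul_smul, _root_.neg_smul, div_eq_inv_mul]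

lemma exists_smul_eq_halfTurn_mul_halfTurn_right (g : SL(2, ℝ)) (P T : ℍ)
    (h : ((g : Matrix (Fin 2) (Fin 2) ℝ) * halfTurn P).trace = 0)
    (hT : dist P T = dist T (g • P)) (hT' : dist P T + dist T (g • P) = dist P (g • P)) :
    ∃ a : ℝ, halfTurn T * halfTurn P = a • (g : Matrix (Fin 2) (Fin 2) ℝ) := by
  have hm := halfTurn_add_halfTurn_of_midpoint P _ T hT hT'
  have hc := (Real.cosh_pos (dist P T)).ne'
  refine ⟨-((g : Matrix (Fin 2) (Fin 2) ℝ).trace / (2 * Real.cosh (dist P T))), ?_⟩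
  have hs : halfTurn T = (2 * Real.cosh (dist P T))⁻¹ • (halfTurn P + halfTurn (g • P)) := by
    rw [hm, smul_smul, inv_mul_cancel₀ (by positivity), one_smul]
  rw [hs, Matrix.smul_mul, halfTurn_smul, add_mul, mul_assoc, mul_assoc, ← mul_assoc (halfTurn P),
    halfTurn_mul_inv_mul_halfTurn g P h, halfTurn_mul_self, mul_neg, ← neg_add, one_add_mul_self,
    smul_neg, smul_smul, _root_.neg_smul, div_eq_inv_mul]

lemma sq_eq_one_of_halfTurn_mul_halfTurn (g : SL(2, ℝ)) (z w : ℍ) (a : ℝ)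
    (h : halfTurn z * halfTurn w = a • (g : Matrix (Fin 2) (Fin 2) ℝ)) : a ^ 2 = 1 := by
  have := congrArg Matrix.det h
  simpa [det_halfTurn, Matrix.det_smul] using this.symm

/-- A product of two half-turns has both centres on its axis, and translates by twice the
distance between them. -/
lemma two_mul_dist_le_dist_smul (g : SL(2, ℝ)) (S T : ℍ) (a : ℝ)
    (h : halfTurn T * halfTurn S = a • (g : Matrix (Fin 2) (Fin 2) ℝ)) :
    |(g : Matrix (Fin 2) (Fin 2) ℝ).trace| = 2 * Real.cosh (dist S T) ∧
    dist S (g • S) = 2 * dist S T ∧ dist T (g • T) = 2 * dist S T ∧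
    ∀ w : ℍ, 2 * dist S T ≤ dist w (g • w) := by
  have ha := sq_eq_one_of_halfTurn_mul_halfTurn g T S a h
  have ha0 : a ≠ 0 := by rintro rfl; simp at ha
  have htr : a * (g : Matrix (Fin 2) (Fin 2) ℝ).trace = -2 * Real.cosh (dist S T) := by
    rw [← smul_eq_mul, ← Matrix.trace_smul, ← h, trace_halfTurn_mul_halfTurn, dist_comm]
  have habs : |a| = 1 := by simpa using sq_eq_sq_iff_abs_eq_abs a 1 |>.1 (by simpa using ha)
  have hc := Real.cosh_pos (dist S T)
  have htr' : |(g : Matrix (Fin 2) (Fin 2) ℝ).trace| = 2 * Real.cosh (dist S T) := by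
    have := congrArg abs htr
    rw [abs_mul, habs, one_mul] at this
    rw [this, neg_mul, abs_neg, abs_of_pos (by positivity)]
  have hdisp (w : ℍ) : 2 * Real.cosh (dist w (g • w)) = 2 * Real.cosh (2 * dist S T) +
      ((g : Matrix (Fin 2) (Fin 2) ℝ) * halfTurn w).trace ^ 2 := by
    rw [two_mul_cosh_dist_smul, ← sq_abs (Matrix.trace _), htr', Real.cosh_two_mul, Real.sinh_sq]
    ring
  have hST : 0 ≤ 2 * dist S T := by positivity
  have heq (w : ℍ) (hw : (a • (g : Matrix (Fin 2) (Fin 2) ℝ) * halfTurn w).trace = 0) :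
      dist w (g • w) = 2 * dist S T := by
    have h0 : ((g : Matrix (Fin 2) (Fin 2) ℝ) * halfTurn w).trace = 0 := by
      simpa [ha0] using hw
    have h1 := hdisp w
    rw [h0] at h1
    exact Real.cosh_injOn dist_nonneg hST (by linarith)
  refine ⟨htr', heq S ?_, heq T ?_, fun w ↦ ?_⟩
  · rw [← h, mul_assoc, halfTurn_mul_self]
    simp [trace_halfTurn]
  · rw [← h, Matrix.trace_mul_comm, ← mul_assoc, halfTurn_mul_self]
    simp [trace_halfTurn]
  · have h1 := hdisp w
    have h2 : Real.cosh (2 * dist S T) ≤ Real.cosh (dist w (g • w)) := by nlinarith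
    rwa [Real.cosh_le_cosh, abs_of_nonneg hST, abs_of_nonneg dist_nonneg] at h2

/-- If the axes of hyperbolic X and Y cross at P and are distinct, and S, T
are the midpoints of P, X⁻¹·P and of P, Y·P respectively, then the
translation length of Y·X is 2·dist(S,T), S and T lie on the axis of Y·X,
and |tr(Y·X)| = 2·cosh(dist(S,T)). -/
theorem axis_and_length_of_product (X Y : SL(2, ℝ))
    (hX : |Matrix.trace (X : Matrix (Fin 2) (Fin 2) ℝ)| > 2)
    (hY : |Matrix.trace (Y : Matrix (Fin 2) (Fin 2) ℝ)| > 2)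
    (P S T : ℍ)
    (hPX : ∀ w : ℍ, dist P (X • P) ≤ dist w (X • w))
    (hPY : ∀ w : ℍ, dist P (Y • P) ≤ dist w (Y • w))
    (haxes : {z : ℍ | ∀ w : ℍ, dist z (X • z) ≤ dist w (X • w)} ≠
             {z : ℍ | ∀ w : ℍ, dist z (Y • z) ≤ dist w (Y • w)})
    (hS : dist P S = dist S (X⁻¹ • P) ∧ dist P S + dist S (X⁻¹ • P) = dist P (X⁻¹ • P))
    (hT : dist P T = dist T (Y • P) ∧ dist P T + dist T (Y • P) = dist P (Y • P)) :
    (⨅ z : ℍ, dist z ((Y * X) • z)) = 2 * dist S T ∧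
    dist S ((Y * X) • S) = 2 * dist S T ∧
    (∀ w : ℍ, dist S ((Y * X) • S) ≤ dist w ((Y * X) • w)) ∧
    (∀ w : ℍ, dist T ((Y * X) • T) ≤ dist w ((Y * X) • w)) ∧
    |Matrix.trace ((Y * X : SL(2, ℝ)) : Matrix (Fin 2) (Fin 2) ℝ)| =
      2 * Real.cosh (dist S T) := by
  obtain ⟨b, hb⟩ := exists_smul_eq_halfTurn_mul_halfTurn_left X P S
    (trace_mul_halfTurn_eq_zero X hX P hPX) hS.1 hS.2
  obtain ⟨a, ha⟩ := exists_smul_eq_halfTurn_mul_halfTurn_right Y P T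
    (trace_mul_halfTurn_eq_zero Y hY P hPY) hT.1 hT.2
  have hprod : halfTurn T * halfTurn S =
      (-(a * b)) • ((Y * X : SL(2, ℝ)) : Matrix (Fin 2) (Fin 2) ℝ) := by
    calc halfTurn T * halfTurn S
        = -(halfTurn T * (halfTurn P * halfTurn P) * halfTurn S) := by
          simp [halfTurn_mul_self]
      _ = -((halfTurn T * halfTurn P) * (halfTurn P * halfTurn S)) := by
          simp only [mul_assoc]
      _ = _ := by
          rw [ha, hb, Matrix.smul_mul, Matrix.mul_smul, smul_smul, _root_.neg_smul]
          rfl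
  obtain ⟨htr, hdS, hdT, hmin⟩ := two_mul_dist_le_dist_smul (Y * X) S T _ hprod
  refine ⟨le_antisymm ?_ (le_ciInf hmin), hdS, hdS ▸ hmin, hdT ▸ hmin, htr⟩
  rw [← hdS]
  exact ciInf_le ⟨0, by rintro _ ⟨z, rfl⟩; exact dist_nonneg⟩ S
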